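/- arXiv:1405.0556 — 10 statements merged into one kernel-verified Lean document; each statement's English description precedes it below -/
import Mathlib

section
/- Let M be an A-module, m a maximal ideal of R, and v ∈ M a nonzero vector with r•v = 0 for all r ∈ m. If X•v = 0 then t ∈ m, and if Y•v = 0 then σ(t) ∈ m. -/
variable {R A M : Type*}

/-- Weight space of an `A`-module `M` (viewed as `R`-module via `φ`) at an ideal `m`:
`M_m = {v ∈ M : r • v = 0 for all r ∈ m}`. -/
def weightSpace [CommRing R] [Ring A] [AddCommGroup M] [Module A M]
    (φ : R →+* A) (m : Ideal R) : AddSubgroup M where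
  carrier := {v | ∀ r ∈ m, φ r • v = 0}
  zero_mem' := fun r _ => smul_zero (φ r)
  add_mem' := by
    intro a b ha hb r hr
    rw [smul_add, ha r hr, hb r hr, add_zero]
  neg_mem' := by
    intro a ha r hr
    rw [smul_neg, ha r hr, neg_zero]

/-- `M` is a weight module: it is the internal direct sum of its weight spaces
over all maximal ideals of `R`. -/
def IsWeightModule [CommRing R] [Ring A] [AddCommGroup M] [Module A M]
    (φ : R →+* A) : Prop :=
  (⨆ m : {m : Ideal R // m.IsMaximal}, weightSpace (M := M) φ m.1) = ⊤ ∧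
  iSupIndep (fun m : {m : Ideal R // m.IsMaximal} => weightSpace (M := M) φ m.1)

/-- `σ` is an essential endomorphism: for every maximal ideal `m` the map
`r ↦ σ(r) + m` from `R` to `R/m` is surjective. -/
def IsEssential [CommRing R] (σ : R →+* R) : Prop :=
  ∀ m : Ideal R, m.IsMaximal →
    Function.Surjective (fun r : R => Ideal.Quotient.mk m (σ r))

theorem comap_torsionOf_eq_of_isMaximal [Semiring R] [Semiring A] [AddCommMonoid M] [Module A M]
    {φ : R →+* A} {m : Ideal R} (hm : m.IsMaximal) {v : M} (hv : v ≠ 0)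
    (hmv : m ≤ (Ideal.torsionOf A M v).comap φ) :
    (Ideal.torsionOf A M v).comap φ = m := by
  have hproper : (Ideal.torsionOf A M v).comap φ ≠ ⊤ :=
    Ideal.comap_ne_top φ (mt (Ideal.torsionOf_eq_top_iff (R := A) v).mp hv)
  exact (hm.eq_of_le hproper hmv).symm

theorem stmt_0_general [Semiring R] [Semiring A] [AddCommMonoid M] [Module A M]
    {φ : R →+* A} {r : R} {x y : A} (hyx : y * x = φ r)
    {m : Ideal R} (hm : m.IsMaximal) {v : M} (hv : v ≠ 0) (hmv : ∀ s ∈ m, φ s • v = 0)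
    (hxv : x • v = 0) : r ∈ m := by
  have hyxv : y * x ∈ Ideal.torsionOf A M v := Ideal.mul_mem_left _ y hxv
  rwa [hyx, ← Ideal.mem_comap, comap_torsionOf_eq_of_isMaximal hm hv hmv] at hyxv

theorem stmt_0 [CommRing R] [Ring A] [AddCommGroup M] [Module A M]
    (φ : R →+* A) (σ : R →+* R) (t : R) (X Y : A)
    (hYX : Y * X = φ t) (hXY : X * Y = φ (σ t))
    (hXr : ∀ r : R, X * φ r = φ (σ r) * X)
    (hrY : ∀ r : R, φ r * Y = Y * φ (σ r))
    (m : Ideal R) (hm : m.IsMaximal)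
    (v : M) (hv : v ≠ 0) (hwv : ∀ r ∈ m, φ r • v = 0) :
    (X • v = 0 → t ∈ m) ∧ (Y • v = 0 → σ t ∈ m) :=
  ⟨stmt_0_general hYX hm hv hwv, stmt_0_general hXY hm hv hwv⟩
end

section
/- Let M be a weight A-module and m a maximal ideal of R. Then X•M_m is contained in the sum of the weight spaces M_n taken over all maximal ideals n of R with σ(m) ⊆ n. -/
variable {R A M : Type*}

/-!
If `v` is killed by `m`, then `X • v` is killed by the ideal `I` generated by `σ(m)`. Now let `w` be
any vector killed by `I` and write it as a sum of weight vectors `w_n`. Every maximal `n` with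
`I ⊈ n` is comaximal with `I`, so a product of elements `1 - i`, `i ∈ I`, one for each such `n`
occurring in the sum, kills all these components. It is congruent to `1` modulo `I`, hence fixes
`w`, which therefore lies in the sum of the weight spaces at the maximal ideals containing `I`.
-/

section WeightSpace

variable [CommRing R] [Ring A] [AddCommGroup M] [Module A M] {φ : R →+* A}

theorem smul_mem_weightSpace (r : R) {I : Ideal R} {v : M} (hv : v ∈ weightSpace φ I) :
    φ r • v ∈ weightSpace φ I := fun s hs => by
  rw [← mul_smul, ← map_mul, mul_comm, map_mul, mul_smul, hv s hs, smul_zero]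

theorem smul_mem_iSup_weightSpace {ι : Sort*} {I : ι → Ideal R} (r : R) {w : M}
    (hw : w ∈ ⨆ j, weightSpace φ (I j)) : φ r • w ∈ ⨆ j, weightSpace φ (I j) := by
  induction hw using AddSubgroup.iSup_induction' with
  | hp j x hx => exact AddSubgroup.mem_iSup_of_mem j (smul_mem_weightSpace r hx)
  | h1 => simp only [smul_zero, zero_mem]
  | hadd x y _ _ hx hy => simpa only [smul_add] using add_mem hx hy

theorem weightSpace_antitone : Antitone (weightSpace (M := M) φ) :=
  fun _ _ hIJ _ hv r hr => hv r (hIJ hr)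

theorem exists_mem_one_sub_smul_eq_zero {I J : Ideal R} (hIJ : IsCoprime I J) {v : M}
    (hv : v ∈ weightSpace φ J) : ∃ i ∈ I, φ (1 - i) • v = 0 := by
  obtain ⟨i, hi, j, hj, hij⟩ := Ideal.isCoprime_iff_exists.mp hIJ
  exact ⟨i, hi, hv _ (eq_sub_of_add_eq' hij ▸ hj)⟩

theorem exists_mem_one_sub_smul_mem_iSup_weightSpace (I : Ideal R) {w : M}
    (hw : w ∈ ⨆ n : {n : Ideal R // n.IsMaximal}, weightSpace φ n.1) :
    ∃ i ∈ I, φ (1 - i) • w ∈ ⨆ n : {n : Ideal R // n.IsMaximal ∧ I ≤ n}, weightSpace φ n.1 := by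
  induction hw using AddSubgroup.iSup_induction' with
  | hp n v hv =>
    by_cases hIn : I ≤ n.1
    · exact ⟨0, zero_mem I, AddSubgroup.mem_iSup_of_mem ⟨n.1, n.2, hIn⟩ (smul_mem_weightSpace _ hv)⟩
    · have hcoprime : IsCoprime I n.1 :=
        Ideal.isCoprime_iff_sup_eq.mpr (n.2.out.2 _ (right_lt_sup.mpr hIn))
      obtain ⟨i, hi, hiv⟩ := exists_mem_one_sub_smul_eq_zero hcoprime hv
      exact ⟨i, hi, hiv ▸ zero_mem _⟩
  | h1 => exact ⟨0, zero_mem I, by simp only [smul_zero, zero_mem]⟩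
  | hadd x y _ _ hx hy =>
    obtain ⟨i, hi, hix⟩ := hx
    obtain ⟨j, hj, hjy⟩ := hy
    have hfactor : 1 - (i + j - j * i) = (1 - j) * (1 - i) := by ring
    have hx' := smul_mem_iSup_weightSpace (1 - j) hix
    have hy' := smul_mem_iSup_weightSpace (1 - i) hjy
    rw [← mul_smul, ← map_mul] at hx' hy'
    rw [mul_comm] at hy'
    refine ⟨i + j - j * i, sub_mem (add_mem hi hj) (I.mul_mem_left j hi), ?_⟩
    rw [hfactor, smul_add]
    exact add_mem hx' hy'

theorem weightSpace_eq_iSup_of_iSup_eq_top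
    (hM : ⨆ n : {n : Ideal R // n.IsMaximal}, weightSpace (M := M) φ n.1 = ⊤) (I : Ideal R) :
    weightSpace (M := M) φ I =
      ⨆ n : {n : Ideal R // n.IsMaximal ∧ I ≤ n}, weightSpace φ n.1 := by
  refine le_antisymm (fun w hw => ?_) (iSup_le fun n => weightSpace_antitone n.2.2)
  obtain ⟨i, hi, hiw⟩ :=
    exists_mem_one_sub_smul_mem_iSup_weightSpace I (hM ▸ AddSubgroup.mem_top w)
  rwa [map_sub, map_one, sub_smul, one_smul, hw i hi, sub_zero] at hiw

theorem smul_mem_weightSpace_map {σ : R →+* R} {X : A} (hX : ∀ r, X * φ r = φ (σ r) * X)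
    {I : Ideal R} {v : M} (hv : v ∈ weightSpace φ I) : X • v ∈ weightSpace φ (I.map σ) := by
  have hmap : I.map σ ≤ (Ideal.torsionOf A M (X • v)).comap φ :=
    Ideal.map_le_of_le_comap fun r hr => by
      rw [Ideal.mem_comap, Ideal.mem_comap, Ideal.mem_torsionOf_iff, ← mul_smul, ← hX, mul_smul,
        hv r hr, smul_zero]
  exact hmap

end WeightSpace

theorem stmt_1_general [CommRing R] [Ring A] [AddCommGroup M] [Module A M]
    (φ : R →+* A) (σ : R →+* R) (X : A)
    (hX : ∀ r : R, X * φ r = φ (σ r) * X)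
    (hM : ⨆ n : {n : Ideal R // n.IsMaximal}, weightSpace (M := M) φ n.1 = ⊤)
    (I : Ideal R) :
    ∀ v ∈ weightSpace (M := M) φ I,
      X • v ∈ ⨆ n ∈ {n : Ideal R | n.IsMaximal ∧ ∀ r ∈ I, σ r ∈ n}, weightSpace (M := M) φ n := by
  intro v hv
  have hXv : X • v ∈ weightSpace φ (I.map σ) := smul_mem_weightSpace_map hX hv
  rw [weightSpace_eq_iSup_of_iSup_eq_top hM, iSup_subtype] at hXv
  simp only [Ideal.map_le_iff_le_comap] at hXv
  exact hXv

theorem stmt_1 [CommRing R] [Ring A] [AddCommGroup M] [Module A M]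
    (φ : R →+* A) (σ : R →+* R) (t : R) (X Y : A)
    (hYX : Y * X = φ t) (hXY : X * Y = φ (σ t))
    (hXr : ∀ r : R, X * φ r = φ (σ r) * X)
    (hrY : ∀ r : R, φ r * Y = Y * φ (σ r))
    (hw : IsWeightModule (M := M) φ)
    (m : Ideal R) (hm : m.IsMaximal) :
    ∀ v ∈ weightSpace (M := M) φ m,
      X • v ∈ ⨆ n ∈ {n : Ideal R | n.IsMaximal ∧ ∀ r ∈ m, σ r ∈ n},
        weightSpace (M := M) φ n :=
  stmt_1_general φ σ X hXr hw.1 m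
end

section
/- Let M be a weight A-module and m ∈ supp(M). Assume that either σ(t) ∉ m, or there exists a maximal ideal n ∈ supp(M) with σ(n) ⊆ m. Then Y•M_m is contained in the sum of the weight spaces M_n taken over all maximal ideals n of R with σ(n) ⊆ m. -/
variable {R A M : Type*}

/-!
For every ideal `m`, the relation `φ r * Y = Y * φ (σ r)` gives `Y • M_m ⊆ M_{σ⁻¹(m)}`, so the
question is whether the prime ideal `σ⁻¹(m)` is maximal. It is if it contains a maximal ideal. If
`X * Y = φ s` with `s ∉ m`, then for `0 ≠ v ∈ M_m` the annihilator of `Y • v` lies in `σ⁻¹(m)`.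
But every element of a module spanned by weight vectors is killed by a finite intersection of
maximal ideals, and a prime ideal containing such an intersection contains one of them.
-/

section WeightSpace

variable [CommRing R] [Ring A] [AddCommGroup M] [Module A M] {φ : R →+* A}

theorem weightSpace_anti {I J : Ideal R} (h : I ≤ J) :
    weightSpace (M := M) φ J ≤ weightSpace φ I :=
  fun _ hv r hr => hv r (h hr)

theorem exists_mem_weightSpace_finset_inf {ι : Type*} {I : ι → Ideal R} {v : M}
    (hv : v ∈ ⨆ i, weightSpace φ (I i)) : ∃ s : Finset ι, v ∈ weightSpace φ (s.inf I) := by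
  classical
  have hmono : Monotone fun s : Finset ι => weightSpace (M := M) φ (s.inf I) :=
    fun _ _ h => weightSpace_anti (Finset.inf_mono h)
  have hle : ⨆ i, weightSpace (M := M) φ (I i) ≤ ⨆ s : Finset ι, weightSpace φ (s.inf I) :=
    iSup_le fun i => le_iSup_of_le {i} (weightSpace_anti Finset.inf_singleton.le)
  exact (AddSubgroup.mem_iSup_of_directed hmono.directed_le).1 (hle hv)

theorem exists_le_of_mem_iSup_weightSpace {ι : Type*} {I : ι → Ideal R} {p : Ideal R}
    (hp : p.IsPrime) {v : M} (hv : v ∈ ⨆ i, weightSpace φ (I i))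
    (hann : ∀ r, φ r • v = 0 → r ∈ p) : ∃ i, I i ≤ p := by
  obtain ⟨s, hs⟩ := exists_mem_weightSpace_finset_inf hv
  obtain ⟨i, -, hi⟩ := hp.inf_le'.1 fun r hr => hann r (hs r hr)
  exact ⟨i, hi⟩

theorem map_smul_eq_zero_iff_of_mem_weightSpace {m : Ideal R} (hm : m.IsMaximal) {v : M}
    (hv : v ∈ weightSpace φ m) (hv0 : v ≠ 0) {r : R} : φ r • v = 0 ↔ r ∈ m := by
  refine ⟨fun hr => ?_, hv r⟩
  by_contra hrm
  obtain ⟨a, b, hb, hab⟩ := hm.exists_inv hrm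
  apply hv0
  calc v = φ (a * r + b) • v := by rw [hab, map_one, one_smul]
    _ = φ a • φ r • v + φ b • v := by rw [map_add, map_mul, add_smul, mul_smul]
    _ = 0 := by rw [hr, hv b hb, smul_zero, add_zero]

variable {σ : R →+* R} {X Y : A} {m : Ideal R}

theorem smul_mem_weightSpace_comap (hrY : ∀ r, φ r * Y = Y * φ (σ r)) {v : M}
    (hv : v ∈ weightSpace φ m) : Y • v ∈ weightSpace φ (m.comap σ) := by
  intro r hr
  rw [← mul_smul, hrY, mul_smul, hv _ hr, smul_zero]

theorem mem_comap_of_map_smul_smul_eq_zero (hrY : ∀ r, φ r * Y = Y * φ (σ r)) {s : R}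
    (hXY : X * Y = φ s) (hm : m.IsMaximal) (hs : s ∉ m) {v : M} (hv : v ∈ weightSpace φ m)
    (hv0 : v ≠ 0) {r : R} (hr : φ r • Y • v = 0) : r ∈ m.comap σ := by
  have hkill : φ (s * σ r) • v = 0 := by
    calc φ (s * σ r) • v = X • φ r • Y • v := by
          rw [map_mul, ← hXY, mul_assoc, ← hrY, mul_smul, mul_smul]
      _ = 0 := by rw [hr, smul_zero]
  have hmem : s * σ r ∈ m := (map_smul_eq_zero_iff_of_mem_weightSpace hm hv hv0).1 hkill
  exact (hm.isPrime.mem_or_mem hmem).resolve_left hs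

theorem exists_isMaximal_le_comap (hrY : ∀ r, φ r * Y = Y * φ (σ r)) {s : R}
    (hXY : X * Y = φ s)
    (hspan : ⨆ n : {n : Ideal R // n.IsMaximal}, weightSpace (M := M) φ n.1 = ⊤)
    (hm : m.IsMaximal) (hsupp : weightSpace (M := M) φ m ≠ ⊥) (hs : s ∉ m) :
    ∃ n : Ideal R, n.IsMaximal ∧ n ≤ m.comap σ := by
  obtain ⟨⟨v, hv⟩, hv0⟩ := AddSubgroup.ne_bot_iff_exists_ne_zero.1 hsupp
  obtain ⟨n, hn⟩ := exists_le_of_mem_iSup_weightSpace (hm.isPrime.comap σ)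
    (hspan ▸ AddSubgroup.mem_top (Y • v))
    fun _ => mem_comap_of_map_smul_smul_eq_zero hrY hXY hm hs hv (by simpa using hv0)
  exact ⟨n.1, n.2, hn⟩

end WeightSpace

theorem stmt_2_general [CommRing R] [Ring A] [AddCommGroup M] [Module A M]
    {φ : R →+* A} {σ : R →+* R} {s : R} {X Y : A}
    (hXY : X * Y = φ s) (hrY : ∀ r, φ r * Y = Y * φ (σ r))
    (hspan : ⨆ n : {n : Ideal R // n.IsMaximal}, weightSpace (M := M) φ n.1 = ⊤)
    {m : Ideal R} (hm : m.IsMaximal) (hsupp : weightSpace (M := M) φ m ≠ ⊥)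
    (hcase : s ∉ m ∨ ∃ n : Ideal R, n.IsMaximal ∧ n ≤ m.comap σ) :
    (m.comap σ).IsMaximal ∧
      ∀ v ∈ weightSpace (M := M) φ m, Y • v ∈ weightSpace φ (m.comap σ) := by
  obtain ⟨n, hn, hnm⟩ : ∃ n : Ideal R, n.IsMaximal ∧ n ≤ m.comap σ :=
    hcase.elim (exists_isMaximal_le_comap hrY hXY hspan hm hsupp) id
  have hn_eq : n = m.comap σ := hn.eq_of_le (hm.isPrime.comap σ).ne_top hnm
  exact ⟨hn_eq ▸ hn, fun _ => smul_mem_weightSpace_comap hrY⟩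

theorem stmt_2 [CommRing R] [Ring A] [AddCommGroup M] [Module A M]
    (φ : R →+* A) (σ : R →+* R) (t : R) (X Y : A)
    (hYX : Y * X = φ t) (hXY : X * Y = φ (σ t))
    (hXr : ∀ r : R, X * φ r = φ (σ r) * X)
    (hrY : ∀ r : R, φ r * Y = Y * φ (σ r))
    (hw : IsWeightModule (M := M) φ)
    (m : Ideal R) (hm : m.IsMaximal) (hsupp : weightSpace (M := M) φ m ≠ ⊥)
    (hcase : σ t ∉ m ∨
      ∃ n : Ideal R, n.IsMaximal ∧ weightSpace (M := M) φ n ≠ ⊥ ∧ ∀ r ∈ n, σ r ∈ m) :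
    ∀ v ∈ weightSpace (M := M) φ m,
      Y • v ∈ ⨆ n ∈ {n : Ideal R | n.IsMaximal ∧ ∀ r ∈ n, σ r ∈ m},
        weightSpace (M := M) φ n := by
  obtain ⟨hmax, hmem⟩ := stmt_2_general hXY hrY hw.1 hm hsupp
    (hcase.imp_right fun ⟨n, hn, _, hnm⟩ => ⟨n, hn, hnm⟩)
  exact fun v hv => AddSubgroup.mem_iSup_of_mem _ <|
    AddSubgroup.mem_iSup_of_mem ⟨hmax, fun _ => id⟩ (hmem v hv)
end

section
/- Let m be a maximal ideal of R such that σ(t) ∉ m and such that for every maximal ideal n of R one has σ(n) ⊄ m. Then for every weight A-module M the weight space M_m is zero. -/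
variable {R A M : Type*}

/-!
Let `v ∈ M_m`. Since `Y • v` is a finite sum of weight vectors, each killed by an ideal not
contained in the prime `σ⁻¹(m)`, some `r` with `σ r ∉ m` kills `Y • v`. Then
`X * φ r * Y = φ (σ r * σ t)` kills `v`, and `σ r * σ t` is invertible modulo `m`, so `v = 0`.
-/

section WeightSpace

variable [CommRing R] [Ring A] [AddCommGroup M] [Module A M] {φ : R →+* A}

theorem exists_notMem_smul_eq_zero_of_mem_iSup_weightSpace {ι : Sort*} {n : ι → Ideal R}
    {p : Ideal R} [hprime : p.IsPrime] (hn : ∀ i, ¬ n i ≤ p) {w : M}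
    (hw : w ∈ ⨆ i, weightSpace (M := M) φ (n i)) : ∃ r ∉ p, φ r • w = 0 := by
  induction hw using AddSubgroup.iSup_induction' with
  | hp i x hx =>
    obtain ⟨r, hr, hrp⟩ := SetLike.not_le_iff_exists.mp (hn i)
    exact ⟨r, hrp, hx r hr⟩
  | h1 => exact ⟨1, p.one_notMem, smul_zero _⟩
  | hadd x y _ _ hx hy =>
    obtain ⟨a, ha, hax⟩ := hx
    obtain ⟨b, hb, hby⟩ := hy
    have habx : φ (a * b) • x = 0 := by rw [mul_comm, map_mul, mul_smul, hax, smul_zero]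
    have haby : φ (a * b) • y = 0 := by rw [map_mul, mul_smul, hby, smul_zero]
    exact ⟨a * b, hprime.mul_notMem ha hb, by rw [smul_add, habx, haby, add_zero]⟩

theorem eq_zero_of_mem_weightSpace_of_smul_eq_zero {m : Ideal R} (hm : m.IsMaximal) {v : M}
    (hv : v ∈ weightSpace φ m) {r : R} (hr : r ∉ m) (hrv : φ r • v = 0) : v = 0 := by
  obtain ⟨y, i, hi, hyi⟩ := hm.exists_inv hr
  calc
    v = φ (y * r + i) • v := by rw [hyi, map_one, one_smul]
    _ = φ y • φ r • v + φ i • v := by rw [map_add, map_mul, add_smul, mul_smul]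
    _ = 0 := by rw [hrv, hv i hi, smul_zero, add_zero]

theorem stmt_3_general {σ : R →+* R} {s : R} {X Y : A} (hXY : X * Y = φ s)
    (hXr : ∀ r : R, X * φ r = φ (σ r) * X) {m : Ideal R} (hm : m.IsMaximal) (hs : s ∉ m)
    {ι : Sort*} {n : ι → Ideal R} (hn : ∀ i, ¬ n i ≤ m.comap σ)
    (hM : ⨆ i, weightSpace (M := M) φ (n i) = ⊤) : weightSpace (M := M) φ m = ⊥ := by
  refine (AddSubgroup.eq_bot_iff_forall _).mpr fun v hv => ?_
  have hprime : m.IsPrime := hm.isPrime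
  obtain ⟨r, hσr, hrYv⟩ : ∃ r ∉ m.comap σ, φ r • Y • v = 0 :=
    exists_notMem_smul_eq_zero_of_mem_iSup_weightSpace hn (hM ▸ AddSubgroup.mem_top _)
  have hrs : φ (σ r * s) • v = 0 := calc
    φ (σ r * s) • v = (X * φ r * Y) • v := by rw [map_mul, ← hXY, ← mul_assoc, ← hXr]
    _ = X • φ r • Y • v := by rw [mul_smul, mul_smul]
    _ = 0 := by rw [hrYv, smul_zero]
  exact eq_zero_of_mem_weightSpace_of_smul_eq_zero hm hv (hprime.mul_notMem hσr hs) hrs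

end WeightSpace

theorem stmt_3 [CommRing R] [Ring A]
    (φ : R →+* A) (σ : R →+* R) (t : R) (X Y : A)
    (hYX : Y * X = φ t) (hXY : X * Y = φ (σ t))
    (hXr : ∀ r : R, X * φ r = φ (σ r) * X)
    (hrY : ∀ r : R, φ r * Y = Y * φ (σ r))
    (m : Ideal R) (hm : m.IsMaximal) (hmt : σ t ∉ m)
    (hno : ∀ n : Ideal R, n.IsMaximal → ¬ (∀ r ∈ n, σ r ∈ m)) :
    ∀ (M : Type*) [AddCommGroup M] [Module A M],
      IsWeightModule (M := M) φ → weightSpace (M := M) φ m = ⊥ := by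
  intro M _ _ hM
  exact stmt_3_general hXY hXr hm hmt (fun n : {n : Ideal R // n.IsMaximal} => hno n.1 n.2) hM.1
end

section
/- Assume σ is essential. Let M be a weight A-module and m ∈ supp(M), and assume Y•M_m ≠ 0. Then there exists a unique maximal ideal n of R with σ(n) ⊆ m; moreover n ∈ supp(M) and Y•M_m ⊆ M_n. -/
variable {R A M : Type*}

theorem isMaximal_comap_of_surjective_mk_comp {S T : Type*} [Ring S] [Ring T] {f : S →+* T}
    {I : Ideal T} [I.IsTwoSided] (hI : I.IsMaximal)
    (hf : Function.Surjective ((Ideal.Quotient.mk I).comp f)) : (I.comap f).IsMaximal := by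
  have : (⊥ : Ideal (T ⧸ I)).IsMaximal := (Ideal.bot_quotient_isMaximal_iff I).mpr hI
  rw [← Ideal.mk_ker (I := I), RingHom.comap_ker, RingHom.ker_eq_comap_bot]
  exact Ideal.comap_isMaximal_of_surjective _ hf

theorem smul_mem_weightSpace_comap_s6 {S : Type*} [CommRing R] [CommRing S] [Ring A] [AddCommGroup M]
    [Module A M] {φ : R →+* A} {ψ : S →+* A} {f : R →+* S} {a : A}
    (ha : ∀ r, φ r * a = a * ψ (f r)) {I : Ideal S} {v : M} (hv : v ∈ weightSpace ψ I) :
    a • v ∈ weightSpace φ (I.comap f) := fun r hr ↦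
  calc φ r • a • v = a • ψ (f r) • v := by rw [← mul_smul, ha, mul_smul]
    _ = 0 := by rw [hv (f r) hr, smul_zero]

theorem stmt_6_general [CommRing R] [Ring A] [AddCommGroup M] [Module A M]
    (φ : R →+* A) (σ : R →+* R) (Y : A) (hrY : ∀ r : R, φ r * Y = Y * φ (σ r))
    (m : Ideal R) (hm : m.IsMaximal)
    (hσ : Function.Surjective ((Ideal.Quotient.mk m).comp σ))
    (hY : ∃ v ∈ weightSpace (M := M) φ m, Y • v ≠ 0) :
    ∃ n : Ideal R, n.IsMaximal ∧ (∀ r ∈ n, σ r ∈ m) ∧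
      weightSpace (M := M) φ n ≠ ⊥ ∧
      (∀ v ∈ weightSpace (M := M) φ m, Y • v ∈ weightSpace (M := M) φ n) ∧
      ∀ n' : Ideal R, n'.IsMaximal → (∀ r ∈ n', σ r ∈ m) → n' = n := by
  have hmax : (m.comap σ).IsMaximal := isMaximal_comap_of_surjective_mk_comp hm hσ
  have hmaps : ∀ v ∈ weightSpace (M := M) φ m, Y • v ∈ weightSpace (M := M) φ (m.comap σ) :=
    fun _ hv ↦ smul_mem_weightSpace_comap_s6 hrY hv
  have hsupp : weightSpace (M := M) φ (m.comap σ) ≠ ⊥ := by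
    obtain ⟨v, hv, hYv⟩ := hY
    exact fun hbot ↦ hYv ((AddSubgroup.eq_bot_iff_forall _).mp hbot _ (hmaps v hv))
  have hunique : ∀ n' : Ideal R, n'.IsMaximal → (∀ r ∈ n', σ r ∈ m) → n' = m.comap σ :=
    fun _ hn' hle ↦ hn'.eq_of_le hmax.ne_top hle
  exact ⟨m.comap σ, hmax, fun _ ↦ Ideal.mem_comap.mp, hsupp, hmaps, hunique⟩

theorem stmt_6 [CommRing R] [Ring A] [AddCommGroup M] [Module A M]
    (φ : R →+* A) (σ : R →+* R) (t : R) (X Y : A)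
    (hYX : Y * X = φ t) (hXY : X * Y = φ (σ t))
    (hXr : ∀ r : R, X * φ r = φ (σ r) * X)
    (hrY : ∀ r : R, φ r * Y = Y * φ (σ r))
    (hess : IsEssential σ)
    (hw : IsWeightModule (M := M) φ)
    (m : Ideal R) (hm : m.IsMaximal) (hsupp : weightSpace (M := M) φ m ≠ ⊥)
    (hY : ∃ v ∈ weightSpace (M := M) φ m, Y • v ≠ 0) :
    ∃ n : Ideal R, n.IsMaximal ∧ (∀ r ∈ n, σ r ∈ m) ∧
      weightSpace (M := M) φ n ≠ ⊥ ∧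
      (∀ v ∈ weightSpace (M := M) φ m, Y • v ∈ weightSpace (M := M) φ n) ∧
      ∀ n' : Ideal R, n'.IsMaximal → (∀ r ∈ n', σ r ∈ m) → n' = n :=
  stmt_6_general φ σ Y hrY m hm (hess m hm) hY
end

section
/- Assume A is generated as a ring by φ(R) ∪ {X, Y}. Then A = Σ_{i,j ≥ 0} Y^i · φ(R) · X^j; that is, every element of A is a finite sum of elements of the form Y^i · φ(r) · X^j with i, j ∈ ℤ_{≥0} and r ∈ R. -/
variable {R A M : Type*}

/-!
The additive span of the elements `Y ^ i * φ r * X ^ j` contains `1`, so it is enough that it is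
stable under left multiplication by the ring generators. Multiplication by `Y` raises `i`. An
element of `φ(R)` moves past `Y ^ i` and is absorbed into `φ r`. Finally `X` moves past `φ r` when
`i = 0`, and otherwise `X * Y` collapses to an element of `φ(R)`.
-/

theorem subsemiringClosure_subset_of_mul_mem [Semiring A] {s : Set A}
    {S : AddSubmonoid A} (one_mem : 1 ∈ S) (mul_mem : ∀ a ∈ s, ∀ b ∈ S, a * b ∈ S) :
    (Subsemiring.closure s : Set A) ⊆ S := by
  rw [Subsemiring.coe_closure_eq, SetLike.coe_subset_coe, AddSubmonoid.closure_le]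
  intro a ha
  induction ha using Submonoid.closure_induction_left with
  | one => exact one_mem
  | mul_left a ha b _ hb => exact mul_mem a ha b hb

theorem subsemiringClosure_eq_top_of_subringClosure_eq_top [Ring A] {s : Set A}
    (neg_one_mem : -1 ∈ Subsemiring.closure s) (hs : Subring.closure s = ⊤) :
    Subsemiring.closure s = ⊤ := by
  have closure_le : Subring.closure s ≤ (Subsemiring.closure s).toSubring neg_one_mem :=
    Subring.closure_le.2 Subsemiring.subset_closure
  exact eq_top_iff.2 fun a _ => closure_le (hs ▸ Subring.mem_top a)

section NormalOrdered

variable [Semiring R] [Semiring A]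

/-- The sum `Σ Y ^ i * φ(R) * X ^ j` over all `i, j ≥ 0`: the finite sums of normally ordered
monomials, those with the powers of `Y` on the left and the powers of `X` on the right. It is only
an additive submonoid, since without commutation relations it need not be stable under products. -/
def normalOrderedSpan (φ : R →+* A) (X Y : A) : AddSubmonoid A :=
  AddSubmonoid.closure {x : A | ∃ (i j : ℕ) (r : R), x = Y ^ i * φ r * X ^ j}

variable {φ : R →+* A} {σ τ : R → R} {X Y : A}

theorem map_mul_pow_eq_pow_mul_map_iterate (hrY : ∀ r, φ r * Y = Y * φ (τ r)) (r : R) (i : ℕ) :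
    φ r * Y ^ i = Y ^ i * φ (τ^[i] r) := by
  induction i with
  | zero => simp
  | succ i ih =>
    rw [pow_succ, ← mul_assoc, ih, mul_assoc, hrY, ← mul_assoc, Function.iterate_succ_apply']

namespace normalOrderedSpan

theorem monomial_mem (i j : ℕ) (r : R) : Y ^ i * φ r * X ^ j ∈ normalOrderedSpan φ X Y :=
  AddSubmonoid.subset_closure ⟨i, j, r, rfl⟩

protected theorem one_mem : 1 ∈ normalOrderedSpan φ X Y := by
  simpa using monomial_mem (φ := φ) (X := X) (Y := Y) 0 0 1

theorem mul_mem_of_mul_monomial_mem {a b : A}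
    (ha : ∀ (i j : ℕ) (r : R), a * (Y ^ i * φ r * X ^ j) ∈ normalOrderedSpan φ X Y)
    (hb : b ∈ normalOrderedSpan φ X Y) : a * b ∈ normalOrderedSpan φ X Y := by
  have span_le : normalOrderedSpan φ X Y ≤
      (normalOrderedSpan φ X Y).comap (AddMonoidHom.mulLeft a) := by
    refine AddSubmonoid.closure_le.2 ?_
    rintro _ ⟨i, j, r, rfl⟩
    exact ha i j r
  exact span_le hb

theorem map_mul_mem (hrY : ∀ r, φ r * Y = Y * φ (τ r)) (s : R) {b : A}
    (hb : b ∈ normalOrderedSpan φ X Y) : φ s * b ∈ normalOrderedSpan φ X Y := by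
  refine mul_mem_of_mul_monomial_mem (fun i j r => ?_) hb
  have absorb : φ s * (Y ^ i * φ r * X ^ j) = Y ^ i * φ (τ^[i] s * r) * X ^ j := by
    simp only [← mul_assoc, map_mul, map_mul_pow_eq_pow_mul_map_iterate hrY]
  exact absorb ▸ monomial_mem i j _

theorem Y_mul_mem {b : A} (hb : b ∈ normalOrderedSpan φ X Y) :
    Y * b ∈ normalOrderedSpan φ X Y := by
  refine mul_mem_of_mul_monomial_mem (fun i j r => ?_) hb
  simpa only [pow_succ', mul_assoc] using monomial_mem (φ := φ) (X := X) (Y := Y) (i + 1) j r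

theorem X_mul_mem {u : R} (hXY : X * Y = φ u)
    (hXr : ∀ r, X * φ r = φ (σ r) * X) (hrY : ∀ r, φ r * Y = Y * φ (τ r)) {b : A}
    (hb : b ∈ normalOrderedSpan φ X Y) : X * b ∈ normalOrderedSpan φ X Y := by
  refine mul_mem_of_mul_monomial_mem (fun i j r => ?_) hb
  cases i with
  | zero =>
    have move_past : X * (Y ^ 0 * φ r * X ^ j) = Y ^ 0 * φ (σ r) * X ^ (j + 1) := by
      rw [pow_zero, one_mul, one_mul, ← mul_assoc, hXr, mul_assoc, pow_succ']
    exact move_past ▸ monomial_mem 0 (j + 1) (σ r)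
  | succ i =>
    have collapse : X * (Y ^ (i + 1) * φ r * X ^ j) = φ u * (Y ^ i * φ r * X ^ j) := by
      simp only [pow_succ', ← hXY, mul_assoc]
    exact collapse ▸ map_mul_mem hrY u (monomial_mem i j r)

end normalOrderedSpan

theorem stmt_9_general {u : R} (hXY : X * Y = φ u) (hXr : ∀ r, X * φ r = φ (σ r) * X)
    (hrY : ∀ r, φ r * Y = Y * φ (τ r))
    (hgen : Subsemiring.closure (Set.range φ ∪ {X, Y}) = ⊤) :
    normalOrderedSpan φ X Y = ⊤ := by
  have closure_subset := subsemiringClosure_subset_of_mul_mem (s := Set.range φ ∪ {X, Y})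
    (S := normalOrderedSpan φ X Y) normalOrderedSpan.one_mem <| by
      rintro _ (⟨s, rfl⟩ | rfl | rfl) b hb
      · exact normalOrderedSpan.map_mul_mem hrY s hb
      · exact normalOrderedSpan.X_mul_mem hXY hXr hrY hb
      · exact normalOrderedSpan.Y_mul_mem hb
  exact eq_top_iff.2 fun a _ => closure_subset (hgen ▸ Subsemiring.mem_top a)

end NormalOrdered

theorem stmt_9 [CommRing R] [Ring A]
    (φ : R →+* A) (σ : R →+* R) (t : R) (X Y : A)
    (hYX : Y * X = φ t) (hXY : X * Y = φ (σ t))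
    (hXr : ∀ r : R, X * φ r = φ (σ r) * X)
    (hrY : ∀ r : R, φ r * Y = Y * φ (σ r))
    (hgen : Subring.closure (Set.range φ ∪ {X, Y}) = ⊤) :
    ∀ a : A, a ∈ AddSubmonoid.closure
      {x : A | ∃ (i j : ℕ) (r : R), x = Y ^ i * φ r * X ^ j} := by
  have neg_one_mem : -1 ∈ Subsemiring.closure (Set.range φ ∪ {X, Y}) :=
    Subsemiring.subset_closure (Or.inl ⟨-1, by simp⟩)
  exact (AddSubmonoid.eq_top_iff' _).1 <| stmt_9_general hXY hXr hrY <|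
    subsemiringClosure_eq_top_of_subringClosure_eq_top neg_one_mem hgen
end

section
/- Assume σ is essential and A is generated as a ring by φ(R) ∪ {X, Y}. Let M be a simple weight A-module. Then the action of X on M is either injective or locally nilpotent (i.e., for every v ∈ M there exists k ∈ ℤ_{≥0} with X^k•v = 0). -/
variable {R A M : Type*}

/-!
The vectors killed by some power of `X` form a submodule as soon as the powers of `X` satisfy the
left Ore condition: if `X ^ n * a = b * X ^ k`, then `X ^ k • v = 0` forces `X ^ n • a • v = 0`.
A simple module leaves two choices: this submodule is `⊥`, and `X` is injective, or it is `⊤`, and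
`X` is locally nilpotent. The elements `a` satisfying the Ore condition form a subring, so only
generators matter. The relation `X * φ r = φ (σ r) * X` handles `φ r`, and then `X * Y ∈ φ(R)`
handles `Y`.
-/

section LeftOre

variable [Ring A] {x a : A}

/-- The subring of those `a` satisfying the left Ore condition with respect to the powers of `x`:
for every `k`, some left multiple `x ^ n * a` lies in the left ideal generated by `x ^ k`. It is all
of `A` exactly when the powers of `x` are left permutable in `A`. -/
def leftOreSubring (x : A) : Subring A where
  carrier := {a | ∀ k : ℕ, ∃ (n : ℕ) (b : A), x ^ n * a = b * x ^ k}
  zero_mem' k := ⟨0, 0, by simp⟩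
  one_mem' k := ⟨k, 1, by simp⟩
  neg_mem' {a} ha k := by
    obtain ⟨n, b, h⟩ := ha k
    exact ⟨n, -b, by rw [mul_neg, h, neg_mul]⟩
  add_mem' {a a'} ha ha' k := by
    obtain ⟨n, b, h⟩ := ha k
    obtain ⟨n', b', h'⟩ := ha' k
    refine ⟨n + n', x ^ n' * b + x ^ n * b', ?_⟩
    calc x ^ (n + n') * (a + a')
        = x ^ n' * (x ^ n * a) + x ^ n * (x ^ n' * a') := by
          rw [mul_add, ← mul_assoc, ← mul_assoc, ← pow_add, ← pow_add, add_comm n']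
      _ = (x ^ n' * b + x ^ n * b') * x ^ k := by
          rw [h, h', add_mul, mul_assoc, mul_assoc]
  mul_mem' {a a'} ha ha' k := by
    obtain ⟨n', b', h'⟩ := ha' k
    obtain ⟨n, b, h⟩ := ha n'
    exact ⟨n, b * b', by rw [← mul_assoc, h, mul_assoc, h', mul_assoc]⟩

theorem mem_leftOreSubring :
    a ∈ leftOreSubring x ↔ ∀ k : ℕ, ∃ (n : ℕ) (b : A), x ^ n * a = b * x ^ k :=
  Iff.rfl

theorem self_mem_leftOreSubring (x : A) : x ∈ leftOreSubring x :=
  fun k => ⟨k, x, (Commute.pow_self x k).eq⟩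

theorem mem_leftOreSubring_of_mul_mem (h : x * a ∈ leftOreSubring x) : a ∈ leftOreSubring x := by
  intro k
  obtain ⟨n, b, hb⟩ := h k
  exact ⟨n + 1, b, by rw [pow_succ, mul_assoc, hb]⟩

end LeftOre

theorem semiconjBy_pow_iterate [Monoid A] {x : A} {φ : R → A} {σ : R → R}
    (h : ∀ r, SemiconjBy x (φ r) (φ (σ r))) (k : ℕ) (r : R) :
    SemiconjBy (x ^ k) (φ r) (φ (σ^[k] r)) := by
  induction k generalizing r with
  | zero => simp
  | succ k ih => exact pow_succ x k ▸ (ih (σ r)).mul_left (h r)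

theorem apply_mem_leftOreSubring [Ring A] {x : A} {φ : R → A} {σ : R → R}
    (h : ∀ r, SemiconjBy x (φ r) (φ (σ r))) (r : R) : φ r ∈ leftOreSubring x :=
  fun k => ⟨k, φ (σ^[k] r), semiconjBy_pow_iterate h k r⟩

theorem leftOreSubring_eq_top_of_closure_eq_top [Ring A] {x y : A} {φ : R → A} {σ : R → R}
    (hφ : ∀ r, SemiconjBy x (φ r) (φ (σ r))) (hxy : x * y ∈ Set.range φ)
    (hgen : Subring.closure (Set.range φ ∪ {x, y}) = ⊤) : leftOreSubring x = ⊤ := by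
  rw [eq_top_iff, ← hgen, Subring.closure_le]
  have hrange : Set.range φ ⊆ leftOreSubring x :=
    Set.range_subset_iff.2 (apply_mem_leftOreSubring hφ)
  exact Set.union_subset hrange <| Set.pair_subset (self_mem_leftOreSubring x)
    (mem_leftOreSubring_of_mul_mem (hrange hxy))

theorem pow_smul_eq_zero_of_le [Monoid A] [AddMonoid M] [DistribMulAction A M] {x : A} {v : M}
    {k l : ℕ} (hkl : k ≤ l) (h : x ^ k • v = 0) : x ^ l • v = 0 := by
  rw [← Nat.sub_add_cancel hkl, pow_add, mul_smul, h, smul_zero]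

section PowTorsion

variable [Ring A] [AddCommGroup M] [Module A M] {x : A}

variable (M) in
/-- The submodule of vectors annihilated by some power of `x`, that is, the torsion of `M` with
respect to the powers of `x`. The Ore condition makes it stable under `A`. -/
def powTorsion (hx : leftOreSubring x = ⊤) : Submodule A M where
  carrier := {v | ∃ k : ℕ, x ^ k • v = 0}
  zero_mem' := ⟨0, smul_zero _⟩
  add_mem' {v w} := by
    rintro ⟨k, hk⟩ ⟨l, hl⟩
    exact ⟨max k l, by
      rw [smul_add, pow_smul_eq_zero_of_le (le_max_left k l) hk,
        pow_smul_eq_zero_of_le (le_max_right k l) hl, add_zero]⟩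
  smul_mem' a v := by
    rintro ⟨k, hk⟩
    obtain ⟨n, b, h⟩ := mem_leftOreSubring.1 (hx ▸ Subring.mem_top a) k
    exact ⟨n, by rw [← mul_smul, h, mul_smul, hk, smul_zero]⟩

theorem mem_powTorsion {hx : leftOreSubring x = ⊤} {v : M} :
    v ∈ powTorsion M hx ↔ ∃ k : ℕ, x ^ k • v = 0 :=
  Iff.rfl

theorem smul_injective_of_powTorsion_eq_bot {hx : leftOreSubring x = ⊤}
    (h : powTorsion M hx = ⊥) : Function.Injective (fun v : M => x • v) := by
  refine (injective_iff_map_eq_zero (DistribSMul.toAddMonoidHom M x)).2 fun v hv => ?_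
  have hmem : v ∈ powTorsion M hx := ⟨1, by rwa [pow_one]⟩
  rwa [h, Submodule.mem_bot] at hmem

theorem smul_injective_or_exists_pow_smul_eq_zero [IsSimpleModule A M]
    (hx : leftOreSubring x = ⊤) :
    Function.Injective (fun v : M => x • v) ∨ ∀ v : M, ∃ k : ℕ, x ^ k • v = 0 :=
  (eq_bot_or_eq_top (powTorsion M hx)).imp smul_injective_of_powTorsion_eq_bot
    fun htop _ => mem_powTorsion.1 (htop ▸ Submodule.mem_top)

end PowTorsion

theorem stmt_13_general [Ring A] [AddCommGroup M] [Module A M] [IsSimpleModule A M]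
    (φ : R → A) (σ : R → R) (X Y : A)
    (hXY : X * Y ∈ Set.range φ)
    (hXr : ∀ r : R, X * φ r = φ (σ r) * X)
    (hgen : Subring.closure (Set.range φ ∪ {X, Y}) = ⊤) :
    Function.Injective (fun v : M => X • v) ∨ ∀ v : M, ∃ k : ℕ, X ^ k • v = 0 :=
  smul_injective_or_exists_pow_smul_eq_zero
    (leftOreSubring_eq_top_of_closure_eq_top hXr hXY hgen)

theorem stmt_13 [CommRing R] [Ring A] [AddCommGroup M] [Module A M]
    (φ : R →+* A) (σ : R →+* R) (t : R) (X Y : A)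
    (hYX : Y * X = φ t) (hXY : X * Y = φ (σ t))
    (hXr : ∀ r : R, X * φ r = φ (σ r) * X)
    (hrY : ∀ r : R, φ r * Y = Y * φ (σ r))
    (hess : IsEssential σ)
    (hgen : Subring.closure (Set.range φ ∪ {X, Y}) = ⊤)
    (hw : IsWeightModule (M := M) φ)
    (hsimple : IsSimpleModule A M) :
    Function.Injective (fun v : M => X • v) ∨ ∀ v : M, ∃ k : ℕ, X ^ k • v = 0 :=
  stmt_13_general φ σ X Y ⟨σ t, hXY.symm⟩ hXr hgen
end

section
/- Assume A is generated as a ring by φ(R) ∪ {X, Y}. Let M be a simple A-module, m a maximal ideal of R, and v ∈ M a nonzero vector with r•v = 0 for all r ∈ m and X•v = 0. Then M = Σ_{i ≥ 0} Y^i•(R•v); that is, M is spanned by the vectors Y^i•(φ(r)•v) with i ∈ ℤ_{≥0} and r ∈ R. -/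
variable {R A M : Type*}

/-!
If `X • v = 0`, then `V = ∑ i, Y ^ i • φ(R) • v` is stable under `A`: an element of `R` moves past
`Y ^ i` at the cost of applying `σ` `i` times, `Y` raises `i` by one, and `X` lowers it by one
because `X * Y` lies in `φ(R)`, killing the bottom layer `i = 0` because `X * φ r = φ (σ r) * X`.
Hence `V` is the submodule `A v`, which is all of `M` when `M` is simple and `v ≠ 0`.
-/

theorem smul_mem_closure_of_forall_mem [AddGroup M] [DistribSMul A M] {a : A} {T : Set M}
    (h : ∀ x ∈ T, a • x ∈ AddSubgroup.closure T) {w : M} (hw : w ∈ AddSubgroup.closure T) :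
    a • w ∈ AddSubgroup.closure T :=
  (AddSubgroup.closure_le
    ((AddSubgroup.closure T).comap (DistribSMul.toAddMonoidHom M a))).2 h hw

theorem smul_mem_of_mem_subringClosure [Ring A] [AddCommGroup M] [Module A M]
    {S : Set A} {N : AddSubgroup M}
    (h : ∀ a ∈ S, ∀ w ∈ N, a • w ∈ N) {a : A} (ha : a ∈ Subring.closure S) :
    ∀ w ∈ N, a • w ∈ N := by
  induction ha using Subring.closure_induction with
  | mem a ha => exact h a ha
  | zero => simp [N.zero_mem]
  | one => simp
  | add a b _ _ iha ihb =>
    intro w hw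
    rw [add_smul]
    exact N.add_mem (iha w hw) (ihb w hw)
  | neg a _ iha =>
    intro w hw
    rw [neg_smul]
    exact N.neg_mem (iha w hw)
  | mul a b _ _ iha ihb =>
    intro w hw
    rw [mul_smul]
    exact iha _ (ihb w hw)

theorem mul_pow_eq_pow_mul_iterate [Monoid A] {φ : R → A} {σ : R → R} {Y : A}
    (hrY : ∀ r, φ r * Y = Y * φ (σ r)) (i : ℕ) (r : R) :
    φ r * Y ^ i = Y ^ i * φ (σ^[i] r) := by
  induction i generalizing r with
  | zero => simp
  | succ i ih =>
    calc φ r * Y ^ (i + 1) = Y * (φ (σ r) * Y ^ i) := by rw [pow_succ', ← mul_assoc, hrY, mul_assoc]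
      _ = Y ^ (i + 1) * φ (σ^[i + 1] r) := by
        rw [ih, ← mul_assoc, ← pow_succ', Function.iterate_succ_apply]

section RaisingSpan

variable [Semiring R] [Ring A] [AddCommGroup M] [Module A M]

/-- The additive subgroup `∑ i ≥ 0, Y ^ i • (R • v)` of `M`, where `R` acts through `φ`. Its
stability under `A` is what identifies it with the submodule generated by `v`. -/
def raisingSpan (φ : R →+* A) (Y : A) (v : M) : AddSubgroup M :=
  AddSubgroup.closure {x : M | ∃ (i : ℕ) (r : R), x = Y ^ i • (φ r • v)}

variable (φ : R →+* A) (Y : A) (v : M)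

theorem pow_smul_map_smul_mem_raisingSpan (i : ℕ) (r : R) :
    Y ^ i • (φ r • v) ∈ raisingSpan φ Y v :=
  AddSubgroup.subset_closure ⟨i, r, rfl⟩

theorem self_mem_raisingSpan : v ∈ raisingSpan φ Y v := by
  simpa using pow_smul_map_smul_mem_raisingSpan φ Y v 0 1

theorem raisingSpan_le_span_singleton :
    raisingSpan φ Y v ≤ (Submodule.span A {v}).toAddSubgroup := by
  refine (AddSubgroup.closure_le _).2 ?_
  rintro _ ⟨i, r, rfl⟩
  exact Submodule.smul_mem _ _ (Submodule.smul_mem _ _ (Submodule.mem_span_singleton_self v))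

variable {φ Y v} {σ : R → R} {s : R} {X : A} {w : M}

theorem smul_mem_raisingSpan_of_forall_mem {a : A}
    (h : ∀ (i : ℕ) (r : R), a • (Y ^ i • (φ r • v)) ∈ raisingSpan φ Y v)
    (hw : w ∈ raisingSpan φ Y v) : a • w ∈ raisingSpan φ Y v := by
  refine smul_mem_closure_of_forall_mem ?_ hw
  rintro _ ⟨i, r, rfl⟩
  exact h i r

theorem raising_smul_mem_raisingSpan (hw : w ∈ raisingSpan φ Y v) : Y • w ∈ raisingSpan φ Y v := by
  refine smul_mem_raisingSpan_of_forall_mem (fun i r => ?_) hw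
  rw [smul_smul, ← pow_succ']
  exact pow_smul_map_smul_mem_raisingSpan φ Y v (i + 1) r

theorem map_smul_mem_raisingSpan (hrY : ∀ r, φ r * Y = Y * φ (σ r)) (c : R)
    (hw : w ∈ raisingSpan φ Y v) : φ c • w ∈ raisingSpan φ Y v := by
  refine smul_mem_raisingSpan_of_forall_mem (fun i r => ?_) hw
  have move_past : φ c • (Y ^ i • (φ r • v)) = Y ^ i • (φ (σ^[i] c * r) • v) := by
    rw [smul_smul, mul_pow_eq_pow_mul_iterate hrY, map_mul, mul_smul, mul_smul]
  rw [move_past]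
  exact pow_smul_map_smul_mem_raisingSpan φ Y v i _

theorem lowering_smul_mem_raisingSpan (hXY : X * Y = φ s) (hXr : ∀ r, X * φ r = φ (σ r) * X)
    (hrY : ∀ r, φ r * Y = Y * φ (σ r)) (hXv : X • v = 0) (hw : w ∈ raisingSpan φ Y v) :
    X • w ∈ raisingSpan φ Y v := by
  refine smul_mem_raisingSpan_of_forall_mem (fun i r => ?_) hw
  cases i with
  | zero =>
    have bottom_killed : X • (Y ^ 0 • (φ r • v)) = 0 := by
      rw [pow_zero, one_smul, smul_smul, hXr, mul_smul, hXv, smul_zero]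
    rw [bottom_killed]
    exact zero_mem _
  | succ i =>
    have lower : X • (Y ^ (i + 1) • (φ r • v)) = φ s • (Y ^ i • (φ r • v)) := by
      rw [pow_succ', smul_smul, ← mul_assoc, hXY, mul_smul]
    rw [lower]
    exact map_smul_mem_raisingSpan hrY s (pow_smul_map_smul_mem_raisingSpan φ Y v i r)

theorem smul_mem_raisingSpan (hXY : X * Y = φ s) (hXr : ∀ r, X * φ r = φ (σ r) * X)
    (hrY : ∀ r, φ r * Y = Y * φ (σ r)) (hgen : Subring.closure (Set.range φ ∪ {X, Y}) = ⊤)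
    (hXv : X • v = 0) (a : A) (hw : w ∈ raisingSpan φ Y v) : a • w ∈ raisingSpan φ Y v := by
  refine smul_mem_of_mem_subringClosure ?_ (hgen ▸ Subring.mem_top a) w hw
  rintro _ (⟨c, rfl⟩ | rfl | rfl) w hw
  · exact map_smul_mem_raisingSpan hrY c hw
  · exact lowering_smul_mem_raisingSpan hXY hXr hrY hXv hw
  · exact raising_smul_mem_raisingSpan hw

theorem stmt_15_general (hXY : X * Y = φ s) (hXr : ∀ r, X * φ r = φ (σ r) * X)
    (hrY : ∀ r, φ r * Y = Y * φ (σ r)) (hgen : Subring.closure (Set.range φ ∪ {X, Y}) = ⊤)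
    (hXv : X • v = 0) : (Submodule.span A {v}).toAddSubgroup = raisingSpan φ Y v := by
  refine le_antisymm (fun w hw => ?_) (raisingSpan_le_span_singleton φ Y v)
  obtain ⟨a, rfl⟩ := Submodule.mem_span_singleton.1 hw
  exact smul_mem_raisingSpan hXY hXr hrY hgen hXv a (self_mem_raisingSpan φ Y v)

end RaisingSpan

theorem stmt_15 [CommRing R] [Ring A] [AddCommGroup M] [Module A M]
    (φ : R →+* A) (σ : R →+* R) (t : R) (X Y : A)
    (hYX : Y * X = φ t) (hXY : X * Y = φ (σ t))
    (hXr : ∀ r : R, X * φ r = φ (σ r) * X)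
    (hrY : ∀ r : R, φ r * Y = Y * φ (σ r))
    (hgen : Subring.closure (Set.range φ ∪ {X, Y}) = ⊤)
    (hsimple : IsSimpleModule A M)
    (m : Ideal R) (hm : m.IsMaximal)
    (v : M) (hv : v ≠ 0) (hwv : ∀ r ∈ m, φ r • v = 0) (hXv : X • v = 0) :
    ∀ w : M, w ∈ AddSubgroup.closure
      {x : M | ∃ (i : ℕ) (r : R), x = Y ^ i • (φ r • v)} := by
  intro w
  have hw : w ∈ Submodule.span A {v} :=
    IsSimpleModule.span_singleton_eq_top A hv ▸ Submodule.mem_top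
  exact (stmt_15_general hXY hXr hrY hgen hXv).le hw
end

section
/- Assume σ is essential and A is generated as a ring by φ(R) ∪ {X, Y}. Let M be a simple weight A-module. Then supp(M) is at most countable. -/
variable {R A M : Type*}

/-!
A simple module is cyclic over `A`; the point is that it is also countably generated over `R` by
weight vectors. Since `X φ(r) = φ(σ(r)) X`, and since on a weight vector `v` essentiality lets us
replace `r` by some `σ(s)`, so that `Y φ(r) v = Y φ(σ(s)) v = φ(s) Y v`, both generators map the
`R`-span of a weight vector `v` into the `R`-span of its image. Hence a countable set of weight
vectors that is closed under decomposing the images by `X` and `Y` into weight vectors has an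
`A`-stable `R`-span. Finally, `R` preserves each weight space and the sum of the weight spaces is
direct, so weight vectors spanning `M` over `R` must meet every nonzero weight space.
-/

theorem exists_countable_superset_forall_subset {α : Type*} {S : Set α} (hS : S.Countable)
    (f : α → Set α) (hf : ∀ a, (f a).Countable) :
    ∃ T, S ⊆ T ∧ T.Countable ∧ ∀ a ∈ T, f a ⊆ T := by
  let T (n : ℕ) : Set α := (fun U ↦ ⋃ a ∈ U, f a)^[n] S
  have hT_succ (n : ℕ) : T (n + 1) = ⋃ a ∈ T n, f a := Function.iterate_succ_apply' _ n S
  have hT_countable (n : ℕ) : (T n).Countable := by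
    induction n with
    | zero => exact hS
    | succ n ih => exact hT_succ n ▸ ih.biUnion fun a _ ↦ hf a
  refine ⟨⋃ n, T n, Set.subset_iUnion T 0, Set.countable_iUnion hT_countable, fun a ha ↦ ?_⟩
  obtain ⟨n, hn⟩ := Set.mem_iUnion.1 ha
  calc
    f a ⊆ ⋃ a ∈ T n, f a := Set.subset_biUnion_of_mem hn
    _ = T (n + 1) := (hT_succ n).symm
    _ ⊆ ⋃ n, T n := Set.subset_iUnion T (n + 1)

theorem smul_mem_span_of_forall_exists_smul_smul {A B M : Type*} [Semiring A] [Semiring B]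
    [AddCommMonoid M] [Module A M] [Module B M] {a : A} {T : Set M}
    (ha : ∀ v ∈ T, ∀ b : B, ∃ c : B, a • b • v = c • a • v)
    (haT : ∀ v ∈ T, a • v ∈ Submodule.span B T) {v : M} (hv : v ∈ Submodule.span B T) :
    a • v ∈ Submodule.span B T := by
  induction hv using Submodule.closure_induction with
  | zero => simp only [smul_zero, zero_mem]
  | add v w _ _ hv hw => exact smul_add a v w ▸ add_mem hv hw
  | smul_mem b v hv =>
    obtain ⟨c, hc⟩ := ha v hv b
    exact hc ▸ Submodule.smul_mem _ c (haT v hv)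

section

variable [CommRing R] [Ring A] [AddCommGroup M] [Module A M] {φ : R →+* A}

theorem smul_mem_of_subringClosure_eq_top {G : Set A} (hG : Subring.closure G = ⊤)
    {N : AddSubgroup M} (hN : ∀ a ∈ G, ∀ v ∈ N, a • v ∈ N) (a : A) {v : M} (hv : v ∈ N) :
    a • v ∈ N := by
  have ha : a ∈ Subring.closure G := hG ▸ Subring.mem_top a
  induction ha using Subring.closure_induction generalizing v with
  | mem a ha => exact hN a ha v hv
  | zero => simp only [zero_smul, zero_mem]
  | one => rwa [one_smul]
  | add a b _ _ iha ihb => exact add_smul a b v ▸ add_mem (iha hv) (ihb hv)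
  | neg a _ iha => exact neg_smul a v ▸ neg_mem (iha hv)
  | mul a b _ _ iha ihb => exact mul_smul a b v ▸ iha (ihb hv)

theorem map_smul_mem_weightSpace {m : Ideal R} {v : M} (hv : v ∈ weightSpace φ m) (r : R) :
    φ r • v ∈ weightSpace φ m := fun s hs ↦ by
  rw [← mul_smul, ← map_mul]
  exact hv _ (m.mul_mem_right r hs)

variable (M φ) in
/-- The set of weight vectors of `M`, that is, the union of its weight spaces at the maximal ideals
of `R`. The zero vector counts as a weight vector. -/
def weightVectors : Set M :=
  ⋃ m : {m : Ideal R // m.IsMaximal}, weightSpace (M := M) φ m.1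

/-- `R`-spans are taken over the subring `φ.range` of `A`; as additive groups they
are the same as spans over `R` acting via `φ`. -/
theorem IsWeightModule.span_weightVectors (hw : IsWeightModule (M := M) φ) :
    Submodule.span φ.range (weightVectors M φ) = ⊤ := by
  have hle : ⨆ m : {m : Ideal R // m.IsMaximal}, weightSpace φ m.1 ≤
      (Submodule.span φ.range (weightVectors M φ)).toAddSubgroup :=
    iSup_le fun m _ hv ↦ Submodule.subset_span (Set.mem_iUnion_of_mem m hv)
  exact eq_top_iff.2 fun v _ ↦ hle (hw.1 ▸ AddSubgroup.mem_top v)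

theorem IsWeightModule.exists_finset_weightVectors_mem_span (hw : IsWeightModule (M := M) φ)
    (v : M) :
    ∃ T : Finset M, ↑T ⊆ weightVectors M φ ∧ v ∈ Submodule.span φ.range (T : Set M) :=
  Submodule.mem_span_finite_of_mem_span (hw.span_weightVectors ▸ Submodule.mem_top)

theorem IsWeightModule.countable_support_of_span_eq_top (hw : IsWeightModule (M := M) φ)
    {T : Set M} (hT : T.Countable) (hTw : T ⊆ weightVectors M φ)
    (hspan : Submodule.span φ.range T = ⊤) :
    {m : Ideal R | m.IsMaximal ∧ weightSpace (M := M) φ m ≠ ⊥}.Countable := by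
  have hweight (v : T) : ∃ m : {m : Ideal R // m.IsMaximal}, v.1 ∈ weightSpace φ m.1 :=
    Set.mem_iUnion.1 (hTw v.2)
  choose μ hμ using hweight
  have := hT.to_subtype
  refine (Set.countable_range fun v ↦ (μ v).1).mono ?_
  rintro m ⟨hm, hne⟩
  by_contra hmT
  let others : AddSubgroup M := ⨆ (n) (_ : n ≠ (⟨m, hm⟩ : {m : Ideal R // m.IsMaximal})),
    weightSpace φ n.1
  have hothers (v : M) : v ∈ others := by
    have hv : v ∈ Submodule.span φ.range T := hspan ▸ Submodule.mem_top
    induction hv using Submodule.closure_induction with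
    | zero => exact zero_mem _
    | add v w _ _ hv hw => exact add_mem hv hw
    | smul_mem r v hv =>
      obtain ⟨_, r, rfl⟩ := r
      have hμ_ne : μ ⟨v, hv⟩ ≠ ⟨m, hm⟩ := fun h ↦ hmT ⟨⟨v, hv⟩, congrArg Subtype.val h⟩
      have hle : weightSpace φ (μ ⟨v, hv⟩).1 ≤ others :=
        le_iSup₂_of_le (μ ⟨v, hv⟩) hμ_ne le_rfl
      exact hle (map_smul_mem_weightSpace (hμ ⟨v, hv⟩) r)
  exact hne (eq_bot_iff.2 (hw.2 ⟨m, hm⟩ le_rfl fun v _ ↦ hothers v))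

theorem IsWeightModule.exists_countable_weightVectors_span_eq_top
    (hw : IsWeightModule (M := M) φ) {G : Set A} (hG : G.Countable)
    (hGφ : ∀ a ∈ G, ∀ v ∈ weightVectors M φ, ∀ r, ∃ s, a • φ r • v = φ s • a • v)
    (hgen : Subring.closure (Set.range φ ∪ G) = ⊤)
    {S : Set M} (hS : S.Countable) (hspan : Submodule.span A S = ⊤) :
    ∃ T ⊆ weightVectors M φ, T.Countable ∧ Submodule.span φ.range T = ⊤ := by
  choose L hLw hL using hw.exists_finset_weightVectors_mem_span
  obtain ⟨T, hST, hT, hTG⟩ := exists_countable_superset_forall_subset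
    (hS.biUnion fun v _ ↦ (L v).countable_toSet) (fun v ↦ ⋃ a ∈ G, (L (a • v) : Set M))
    fun v ↦ hG.biUnion fun a _ ↦ (L (a • v)).countable_toSet
  let N := Submodule.span φ.range (T ∩ weightVectors M φ)
  have hLN {v : M} (hv : (L v : Set M) ⊆ T) : v ∈ N :=
    Submodule.span_mono (Set.subset_inter hv (hLw v)) (hL v)
  have hGN : ∀ a ∈ G, ∀ v ∈ N, a • v ∈ N := by
    refine fun a ha _ ↦ smul_mem_span_of_forall_exists_smul_smul ?_
      fun v hv ↦ hLN ((Set.subset_biUnion_of_mem ha).trans (hTG v hv.1))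
    rintro v hv ⟨_, r, rfl⟩
    obtain ⟨s, hs⟩ := hGφ a ha v hv.2 r
    exact ⟨φ.rangeRestrict s, hs⟩
  have hφN : ∀ a ∈ Set.range φ, ∀ v ∈ N, a • v ∈ N := by
    rintro _ ⟨r, rfl⟩ v hv
    exact N.smul_mem (φ.rangeRestrict r) hv
  have hAN (a : A) {v : M} (hv : v ∈ N) : a • v ∈ N :=
    smul_mem_of_subringClosure_eq_top hgen (N := N.toAddSubgroup)
      (fun a ha ↦ ha.elim (hφN a) (hGN a)) a hv
  let P : Submodule A M := { N with smul_mem' := fun a _ hv ↦ hAN a hv }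
  have hSP : S ⊆ P := fun v hv ↦ hLN ((Set.subset_biUnion_of_mem hv).trans hST)
  have hP : P = ⊤ := top_unique (hspan ▸ Submodule.span_le.2 hSP)
  exact ⟨_, Set.inter_subset_right, hT.mono Set.inter_subset_left,
    eq_top_iff.2 fun v _ ↦ (hP ▸ Submodule.mem_top : v ∈ P)⟩

theorem IsEssential.exists_smul_map_smul_eq {σ : R →+* R} (hσ : IsEssential σ) {Y : A}
    (hY : ∀ r, φ r * Y = Y * φ (σ r)) {v : M} (hv : v ∈ weightVectors M φ) (r : R) :
    ∃ s, Y • φ r • v = φ s • Y • v := by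
  obtain ⟨⟨m, hm⟩, hvm⟩ := Set.mem_iUnion.1 hv
  obtain ⟨s, hs⟩ := hσ m hm (Ideal.Quotient.mk m r)
  have hsr : φ (σ s) • v = φ r • v := by
    rw [← sub_eq_zero, ← sub_smul, ← map_sub]
    exact hvm _ (Ideal.Quotient.eq.1 hs)
  exact ⟨s, by rw [← hsr, ← mul_smul, ← hY, mul_smul]⟩

theorem stmt_16_general {G : Set A} (hG : G.Countable)
    (hGφ : ∀ a ∈ G, ∀ v ∈ weightVectors M φ, ∀ r, ∃ s, a • φ r • v = φ s • a • v)
    (hgen : Subring.closure (Set.range φ ∪ G) = ⊤)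
    (hw : IsWeightModule (M := M) φ)
    {S : Set M} (hS : S.Countable) (hspan : Submodule.span A S = ⊤) :
    Set.Countable {m : Ideal R | m.IsMaximal ∧ weightSpace (M := M) φ m ≠ ⊥} := by
  obtain ⟨T, hTw, hT, hTspan⟩ :=
    hw.exists_countable_weightVectors_span_eq_top hG hGφ hgen hS hspan
  exact hw.countable_support_of_span_eq_top hT hTw hTspan

end

theorem stmt_16 [CommRing R] [Ring A] [AddCommGroup M] [Module A M]
    (φ : R →+* A) (σ : R →+* R) (t : R) (X Y : A)
    (hYX : Y * X = φ t) (hXY : X * Y = φ (σ t))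
    (hXr : ∀ r : R, X * φ r = φ (σ r) * X)
    (hrY : ∀ r : R, φ r * Y = Y * φ (σ r))
    (hess : IsEssential σ)
    (hgen : Subring.closure (Set.range φ ∪ {X, Y}) = ⊤)
    (hw : IsWeightModule (M := M) φ)
    (hsimple : IsSimpleModule A M) :
    Set.Countable {m : Ideal R | m.IsMaximal ∧ weightSpace (M := M) φ m ≠ ⊥} := by
  have := hsimple.nontrivial
  obtain ⟨v, hv⟩ := exists_ne (0 : M)
  refine stmt_16_general (Set.toFinite {X, Y}).countable ?_ hgen hw (Set.countable_singleton v)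
    (IsSimpleModule.span_singleton_eq_top A hv)
  rintro _ (rfl | rfl) u hu r
  · exact ⟨σ r, by rw [← mul_smul, hXr, mul_smul]⟩
  · exact hess.exists_smul_map_smul_eq hrY hu r
end

section
/- Let k be a field, R a commutative unital k-algebra, σ : R → R an essential unital k-algebra endomorphism, and t ∈ R. Let A be a unital k-algebra equipped with a unital k-algebra homomorphism φ : R → A and elements X, Y ∈ A satisfying the weak generalized Weyl algebra relations, and assume A is generated as a k-algebra by φ(R) ∪ {X, Y}. Then every simple A-module M that is finite-dimensional over k is a weight module, i.e., M is the internal direct sum of its weight spaces M_m over all maximal ideals m of R. -/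
variable {R A M : Type*}

/-!
Let `W` be the sum of the weight spaces. As `σ` is essential, `σ⁻¹(m)` is maximal for `m` maximal,
so `Y` maps `M_m` into `M_{σ⁻¹(m)}`; hence `W` is stable under `R` and `Y`, but not visibly `X`.
However, `{v | Xⁿ v ∈ W for all n}` is an `A`-submodule inside `W`, because `Xⁿ⁺¹ Y = Xⁿ φ(σ(t))`.
By simplicity it suffices to see that it is nonzero. If `X` is not injective on `M`, then `ker X`
is a nonzero `R`-submodule, hence contains a nonzero vector of `W`. If `X` is injective, it is
bijective and `X⁻¹` satisfies the same commutation rule as `Y`; so `X⁻¹ W ⊆ W`, whence `X W = W` by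
finiteness.
-/

section WeightSpaces

variable [CommRing R] {σ : R →+* R}

theorem IsEssential.isMaximal_comap (hσ : IsEssential σ) {m : Ideal R} (hm : m.IsMaximal) :
    (m.comap σ).IsMaximal := by
  let := Ideal.Quotient.field m
  have hker := RingHom.ker_isMaximal_of_surjective ((Ideal.Quotient.mk m).comp σ) (hσ m hm)
  rwa [← RingHom.comap_ker, Ideal.mk_ker] at hker

theorem isEssential_id : IsEssential (RingHom.id R) :=
  fun _ _ => Ideal.Quotient.mk_surjective

variable [Ring A] [AddCommGroup M] [Module A M]

/-- The other weight spaces vanish in the localization at `m`, whereas `M_m` embeds into it. -/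
theorem iSupIndep_weightSpace (φ : R →+* A) :
    iSupIndep fun m : {m : Ideal R // m.IsMaximal} => weightSpace (M := M) φ m.1 := by
  let : Module R M := Module.compHom M φ
  rintro ⟨m, hm⟩
  let toLocalization := LocalizedModule.mkLinearMap m.primeCompl M
  have others_le_ker : ⨆ j : {m : Ideal R // m.IsMaximal}, ⨆ (_ : j ≠ ⟨m, hm⟩), weightSpace φ j.1 ≤
      toLocalization.ker.toAddSubgroup := by
    refine iSup₂_le fun ⟨j, hj⟩ hjm v hv => ?_
    obtain ⟨r, hrj, hrm⟩ := Set.not_subset.mp fun h : j ≤ m =>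
      hjm (Subtype.ext (hj.eq_of_le hm.ne_top h))
    exact (IsLocalizedModule.eq_zero_iff m.primeCompl toLocalization).mpr ⟨⟨r, hrm⟩, hv r hrj⟩
  refine AddSubgroup.disjoint_def.mpr fun {v} hvm hv => ?_
  obtain ⟨⟨r, hr⟩, hrv⟩ :=
    (IsLocalizedModule.eq_zero_iff m.primeCompl toLocalization).mp (others_le_ker hv)
  obtain ⟨s, a, ha, hsa⟩ := hm.exists_inv hr
  calc
    v = s • r • v + a • v := by rw [smul_smul, ← add_smul, hsa, one_smul]
    _ = 0 := by
      rw [show r • v = 0 from hrv, show a • v = 0 from hvm a ha, smul_zero, add_zero]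

variable (M) in
/-- The sum of all weight spaces of `M`. For `M` to be a weight module means that this is all of
`M`; as it need not be stable under `A` in general, it is only a subgroup. -/
def weightSum (φ : R →+* A) : AddSubgroup M :=
  ⨆ m : {m : Ideal R // m.IsMaximal}, weightSpace φ m.1

theorem isWeightModule_iff_weightSum_eq_top {φ : R →+* A} :
    IsWeightModule (M := M) φ ↔ weightSum M φ = ⊤ :=
  and_iff_left (iSupIndep_weightSpace φ)

theorem weightSpace_le_weightSum (φ : R →+* A) {m : Ideal R} (hm : m.IsMaximal) :
    weightSpace φ m ≤ weightSum M φ :=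
  le_iSup (fun m : {m : Ideal R // m.IsMaximal} => weightSpace (M := M) φ m.1) ⟨m, hm⟩

theorem map_mem_weightSum {φ : R →+* A} (hσ : IsEssential σ) (f : M →+ M)
    (hf : ∀ r v, f (φ (σ r) • v) = φ r • f v) {v : M} (hv : v ∈ weightSum M φ) :
    f v ∈ weightSum M φ := by
  suffices weightSum M φ ≤ (weightSum M φ).comap f from this hv
  refine iSup_le fun ⟨m, hm⟩ w hw => ?_
  refine weightSpace_le_weightSum φ (hσ.isMaximal_comap hm) fun r hr => ?_
  rw [← hf, hw (σ r) hr, map_zero]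

theorem map_smul_mem_weightSum (φ : R →+* A) (r : R) {v : M} (hv : v ∈ weightSum M φ) :
    φ r • v ∈ weightSum M φ := by
  refine map_mem_weightSum isEssential_id (DistribSMul.toAddMonoidHom M (φ r)) (fun s w => ?_) hv
  simp only [DistribSMul.toAddMonoidHom_apply, RingHom.id_apply, smul_smul, ← map_mul, mul_comm]

theorem exists_mem_isMaximal_torsionOf [Module R M] [IsArtinian R M] {N : Submodule R M}
    (hN : N ≠ ⊥) : ∃ v ∈ N, (Ideal.torsionOf R M v).IsMaximal := by
  obtain ⟨S, hS, hSN⟩ := (eq_bot_or_exists_atom_le N).resolve_left hN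
  have : IsSimpleModule R S := isSimpleModule_iff_isAtom.mpr hS
  obtain ⟨v, hv, hv0⟩ := S.ne_bot_iff.mp hS.1
  have hker : Ideal.torsionOf R M v = LinearMap.ker (LinearMap.toSpanSingleton R S ⟨v, hv⟩) := by
    ext r
    simp [Subtype.ext_iff]
  exact ⟨v, hSN hv, hker ▸ IsSimpleModule.ker_toSpanSingleton_isMaximal R (by simpa)⟩

end WeightSpaces

section StableCore

variable [Ring A] [AddCommGroup M] [Module A M]

/-- The largest subgroup of `P` stable under multiplication by `a`, namely
`{v | aⁿ • v ∈ P for all n}`. -/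
def stableCore (a : A) (P : AddSubgroup M) : AddSubgroup M :=
  ⨅ n : ℕ, P.comap (DistribSMul.toAddMonoidHom M (a ^ n))

variable {a : A} {P : AddSubgroup M} {v : M}

theorem mem_stableCore : v ∈ stableCore a P ↔ ∀ n : ℕ, a ^ n • v ∈ P := by
  simp only [stableCore, AddSubgroup.mem_iInf, AddSubgroup.mem_comap,
    DistribSMul.toAddMonoidHom_apply]

theorem stableCore_le : stableCore a P ≤ P := fun v hv => by
  simpa only [pow_zero, one_smul] using mem_stableCore.mp hv 0

theorem smul_mem_stableCore (hv : v ∈ stableCore a P) : a • v ∈ stableCore a P :=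
  mem_stableCore.mpr fun n => by
    simpa only [smul_smul, ← pow_succ] using mem_stableCore.mp hv (n + 1)

theorem le_stableCore (h : ∀ v ∈ P, a • v ∈ P) : P ≤ stableCore a P := fun v hv =>
  mem_stableCore.mpr fun n => by
    induction n with
    | zero => simpa only [pow_zero, one_smul] using hv
    | succ n ih => simpa only [pow_succ', mul_smul] using h _ ih

theorem mem_stableCore_of_smul_eq_zero (hv : v ∈ P) (hav : a • v = 0) : v ∈ stableCore a P :=
  mem_stableCore.mpr fun n => by
    cases n with
    | zero => simpa only [pow_zero, one_smul] using hv
    | succ n => simp only [pow_succ, mul_smul, hav, smul_zero, P.zero_mem]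

variable [CommRing R] {σ : R →+* R} {φ : R →+* A} {X Y : A}

theorem pow_mul_map_eq_map_iterate_mul_pow (hXr : ∀ r, X * φ r = φ (σ r) * X) (n : ℕ) (r : R) :
    X ^ n * φ r = φ (σ^[n] r) * X ^ n := by
  induction n generalizing r with
  | zero => simp
  | succ n ih =>
    rw [pow_succ, mul_assoc, hXr, ← mul_assoc, ih, mul_assoc, Function.iterate_succ_apply]

theorem map_smul_mem_stableCore (hXr : ∀ r, X * φ r = φ (σ r) * X)
    (hPR : ∀ r, ∀ v ∈ P, φ r • v ∈ P) (r : R) (hv : v ∈ stableCore X P) :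
    φ r • v ∈ stableCore X P :=
  mem_stableCore.mpr fun n => by
    rw [smul_smul, pow_mul_map_eq_map_iterate_mul_pow hXr, mul_smul]
    exact hPR _ _ (mem_stableCore.mp hv n)

theorem smul_mem_stableCore_of_mul_eq_map {s : R} (hXY : X * Y = φ s)
    (hXr : ∀ r, X * φ r = φ (σ r) * X) (hPR : ∀ r, ∀ v ∈ P, φ r • v ∈ P)
    (hPY : ∀ v ∈ P, Y • v ∈ P) (hv : v ∈ stableCore X P) : Y • v ∈ stableCore X P :=
  mem_stableCore.mpr fun n => by
    cases n with
    | zero => simpa only [pow_zero, one_smul] using hPY v (stableCore_le hv)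
    | succ n =>
      rw [smul_smul, pow_succ, mul_assoc, hXY, mul_smul]
      exact mem_stableCore.mp (map_smul_mem_stableCore hXr hPR s hv) n

end StableCore

section Algebras

variable {k : Type*} [CommRing k] [Ring A] [Algebra k A] [AddCommGroup M] [Module A M]

theorem eq_top_of_smul_mem_of_adjoin_eq_top [IsSimpleModule A M] {s : Set A}
    (hs : Algebra.adjoin k s = ⊤) {P : AddSubgroup M}
    (hPk : ∀ c : k, ∀ v ∈ P, algebraMap k A c • v ∈ P) (hPs : ∀ a ∈ s, ∀ v ∈ P, a • v ∈ P)
    (hP : P ≠ ⊥) : P = ⊤ := by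
  have smul_mem (a : A) : ∀ v ∈ P, a • v ∈ P := by
    have ha : a ∈ Algebra.adjoin k s := hs ▸ Algebra.mem_top
    induction ha using Algebra.adjoin_induction with
    | mem a ha => exact hPs a ha
    | algebraMap c => exact hPk c
    | add a b _ _ iha ihb =>
      exact fun v hv => (add_smul a b v).symm ▸ P.add_mem (iha v hv) (ihb v hv)
    | mul a b _ _ iha ihb => exact fun v hv => (mul_smul a b v).symm ▸ iha _ (ihb v hv)
  let N : Submodule A M := { P with smul_mem' := fun a v hv => smul_mem a v hv }
  have hN : N ≠ ⊥ := fun h => hP (congrArg Submodule.toAddSubgroup h)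
  exact congrArg Submodule.toAddSubgroup ((eq_bot_or_eq_top N).resolve_left hN)

theorem eq_top_of_stableCore_ne_bot [CommRing R] [Algebra k R] [IsSimpleModule A M]
    {σ : R →+* R} {s : R} {φ : R →ₐ[k] A} {X Y : A}
    (hXY : X * Y = φ s) (hXr : ∀ r, X * φ r = φ (σ r) * X)
    (hgen : Algebra.adjoin k (Set.range (φ : R → A) ∪ {X, Y}) = ⊤) {P : AddSubgroup M}
    (hPR : ∀ r, ∀ v ∈ P, φ r • v ∈ P) (hPY : ∀ v ∈ P, Y • v ∈ P)
    (hP : stableCore X P ≠ ⊥) : P = ⊤ := by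
  have core_smul_mem (r : R) : ∀ v ∈ stableCore X P, φ r • v ∈ stableCore X P :=
    fun _ => map_smul_mem_stableCore (φ := φ.toRingHom) hXr hPR r
  have core_eq_top : stableCore X P = ⊤ := by
    refine eq_top_of_smul_mem_of_adjoin_eq_top hgen
      (fun c => φ.commutes c ▸ core_smul_mem _) ?_ hP
    rintro _ (⟨r, rfl⟩ | rfl | rfl)
    · exact core_smul_mem r
    · exact fun _ => smul_mem_stableCore
    · exact fun _ => smul_mem_stableCore_of_mul_eq_map (φ := φ.toRingHom) hXY hXr hPR hPY
  exact top_le_iff.mp (core_eq_top ▸ stableCore_le)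

variable [Module k M]

theorem map_mem_of_symm_map_mem [IsArtinian k M] (e : M ≃ₗ[k] M) {P : Submodule k M}
    (hP : ∀ v ∈ P, e.symm v ∈ P) {v : M} (hv : v ∈ P) : e v ∈ P := by
  have hinj : Function.Injective (e.symm.toLinearMap.restrict hP) := fun x y hxy =>
    Subtype.ext (e.symm.injective (congrArg Subtype.val hxy))
  obtain ⟨w, hw⟩ := IsArtinian.surjective_of_injective_endomorphism _ hinj ⟨v, hv⟩
  have hwv : e.symm w = v := congrArg Subtype.val hw
  rw [← hwv, e.apply_symm_apply]
  exact w.2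

variable [IsScalarTower k A M] [CommRing R] [Algebra k R] [IsArtinian k M]

theorem exists_ne_zero_mem_weightSum (φ : R →ₐ[k] A) {P : AddSubgroup M}
    (hPR : ∀ r, ∀ v ∈ P, φ r • v ∈ P) (hP : P ≠ ⊥) :
    ∃ v ∈ P, v ≠ 0 ∧ v ∈ weightSum M φ.toRingHom := by
  let : Module R M := Module.compHom M φ.toRingHom
  have : IsScalarTower k R M := ⟨fun c r v => by
    change φ (c • r) • v = c • φ r • v
    rw [map_smul, smul_assoc]⟩
  have : IsArtinian R M := isArtinian_of_tower k inferInstance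
  let N : Submodule R M := { P with smul_mem' := fun r v hv => hPR r v hv }
  have hN : N ≠ ⊥ := fun h => hP (congrArg Submodule.toAddSubgroup h)
  obtain ⟨v, hv, hmax⟩ := exists_mem_isMaximal_torsionOf hN
  refine ⟨v, hv, fun hv0 => hmax.ne_top ?_, weightSpace_le_weightSum φ.toRingHom hmax ?_⟩
  · rw [hv0, Ideal.torsionOf_zero]
  · exact fun r hr => (Ideal.mem_torsionOf_iff v r).mp hr

variable {σ : R →+* R} {φ : R →ₐ[k] A} {X : A}

theorem smul_mem_weightSum_of_injective (hσ : IsEssential σ)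
    (hXr : ∀ r, X * φ r = φ (σ r) * X) (hX : Function.Injective fun v : M => X • v) {v : M}
    (hv : v ∈ weightSum M φ.toRingHom) : X • v ∈ weightSum M φ.toRingHom := by
  let e : M ≃ₗ[k] M := LinearEquiv.ofBijective (Algebra.lsmul k k M X)
    (IsArtinian.bijective_of_injective_endomorphism _ hX)
  let W : Submodule k M :=
    { weightSum M φ.toRingHom with
      smul_mem' := fun c v hv => by
        rw [← algebraMap_smul A c v, ← φ.commutes]
        exact map_smul_mem_weightSum φ.toRingHom _ hv }
  have symm_comm (r : R) (v : M) : e.symm (φ (σ r) • v) = φ r • e.symm v := by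
    rw [e.symm_apply_eq]
    change _ = X • φ r • e.symm v
    rw [smul_smul, hXr, mul_smul]
    exact congrArg _ (e.apply_symm_apply v).symm
  exact map_mem_of_symm_map_mem e (P := W)
    (fun w hw => map_mem_weightSum hσ e.symm.toAddMonoidHom symm_comm hw) hv

theorem stableCore_weightSum_ne_bot [Nontrivial M] (hσ : IsEssential σ)
    (hXr : ∀ r, X * φ r = φ (σ r) * X) : stableCore X (weightSum M φ.toRingHom) ≠ ⊥ := by
  suffices ∃ v ∈ stableCore X (weightSum M φ.toRingHom), v ≠ 0 by
    obtain ⟨v, hv, hv0⟩ := this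
    exact fun h => hv0 (AddSubgroup.mem_bot.mp (h ▸ hv))
  by_cases hX : (DistribSMul.toAddMonoidHom M X).ker = ⊥
  · obtain ⟨v, -, hv0, hv⟩ := exists_ne_zero_mem_weightSum φ (P := (⊤ : AddSubgroup M))
      (fun _ _ _ => AddSubgroup.mem_top _) top_ne_bot
    have hinj := (AddMonoidHom.ker_eq_bot_iff _).mp hX
    exact ⟨v, le_stableCore (fun _ => smul_mem_weightSum_of_injective hσ hXr hinj) hv, hv0⟩
  · have ker_stable (r : R) (v : M) (hv : X • v = 0) : X • φ r • v = 0 := by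
      rw [smul_smul, hXr, mul_smul, hv, smul_zero]
    obtain ⟨v, hXv, hv0, hv⟩ := exists_ne_zero_mem_weightSum φ ker_stable hX
    exact ⟨v, mem_stableCore_of_smul_eq_zero hv hXv, hv0⟩

end Algebras

theorem stmt_17_general {k : Type*} [CommRing k]
    [CommRing R] [Algebra k R] [Ring A] [Algebra k A]
    [AddCommGroup M] [Module A M] [Module k M] [IsScalarTower k A M]
    [IsSimpleModule A M] [IsArtinian k M]
    {σ : R →+* R} {s : R} {φ : R →ₐ[k] A} {X Y : A}
    (hess : IsEssential σ) (hXY : X * Y = φ s)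
    (hXr : ∀ r : R, X * φ r = φ (σ r) * X)
    (hrY : ∀ r : R, φ r * Y = Y * φ (σ r))
    (hgen : Algebra.adjoin k (Set.range (φ : R → A) ∪ {X, Y}) = ⊤) :
    IsWeightModule (M := M) φ.toRingHom := by
  have : Nontrivial M := IsSimpleModule.nontrivial A M
  have hWY : ∀ v ∈ weightSum M φ.toRingHom, Y • v ∈ weightSum M φ.toRingHom := fun _ =>
    map_mem_weightSum hess (DistribSMul.toAddMonoidHom M Y) fun r v => by
      change Y • φ (σ r) • v = φ r • Y • v
      rw [smul_smul, smul_smul, hrY]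
  exact isWeightModule_iff_weightSum_eq_top.mpr <|
    eq_top_of_stableCore_ne_bot hXY hXr hgen (fun r _ => map_smul_mem_weightSum φ.toRingHom r) hWY
      (stableCore_weightSum_ne_bot hess hXr)

theorem stmt_17 (k : Type*) [Field k]
    [CommRing R] [Algebra k R] [Ring A] [Algebra k A]
    [AddCommGroup M] [Module A M] [Module k M] [IsScalarTower k A M]
    (σ : R →ₐ[k] R) (t : R) (φ : R →ₐ[k] A) (X Y : A)
    (hess : IsEssential σ.toRingHom)
    (hYX : Y * X = φ t) (hXY : X * Y = φ (σ t))
    (hXr : ∀ r : R, X * φ r = φ (σ r) * X)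
    (hrY : ∀ r : R, φ r * Y = Y * φ (σ r))
    (hgen : Algebra.adjoin k (Set.range (φ : R → A) ∪ {X, Y}) = ⊤)
    (hsimple : IsSimpleModule A M)
    (hfd : FiniteDimensional k M) :
    IsWeightModule (M := M) φ.toRingHom :=
  stmt_17_general hess hXY hXr hrY hgen
end
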